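/- The real dimension of the space of infinitesimal deformations of the homogeneous sphere map H_n^d equals ((2d+n)/d) · K(n,d)², where K(n,d) = C(n+d−1,d). Equivalently, dim_ℝ hol(H_n^d) = K(n,d)² + 2 K(n,d) C(n+d−1, n). -/

import Mathlib

open Finset

/-- The component of the homogeneous sphere map `H_n^d` at `α`: `√(d!/α!) z^α`. -/
noncomputable def homComp {n : ℕ} (α : Fin n → ℕ) (z : Fin n → ℂ) : ℂ :=
  (Real.sqrt (Nat.multinomial Finset.univ α) : ℂ) * ∏ i, z i ^ α i


abbrev KIdx (n d : ℕ) : Type := {α // α ∈ Finset.piAntidiag (Finset.univ : Finset (Fin n)) d}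

lemma circle_lemma (P : Polynomial ℂ) (d : ℕ)
    (h0 : ∀ k < d, P.coeff k = 0)
    (h : ∀ w : ℂ, ‖w‖ = 1 → (P.eval w * (starRingEnd ℂ) w ^ d).re = 0) :
    (∀ k, d < k → P.coeff k = 0) ∧ (P.coeff d).re = 0 := by
  set N := P.natDegree + 2 * d with hN
  set R : Polynomial ℂ := P.map (starRingEnd ℂ) with hR
  set Q : Polynomial ℂ := Polynomial.X ^ N * P + Polynomial.X ^ (2 * d) * R.reflect N with hQ
  have hRdeg : R.natDegree ≤ N := by
    have h1 : R.natDegree ≤ P.natDegree := Polynomial.natDegree_map_le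
    omega
  have hQ0 : Q = 0 := by
    apply Polynomial.eq_zero_of_infinite_isRoot
    have hinf : Set.Infinite {w : ℂ | ‖w‖ = 1} := by
      have hC : Infinite Circle := by
        have : Infinite (Set.Ioc (-Real.pi) Real.pi) :=
          (Set.Ioc_infinite (by linarith [Real.pi_pos])).to_subtype
        exact Circle.argEquiv.infinite_iff.mpr this
      have := Set.infinite_coe_iff.mp hC
      convert this using 1
      ext w; simp [Submonoid.unitSphere]
    refine hinf.mono ?_
    intro w hw
    have hw' : ‖w‖ = 1 := hw
    have hw0 : w ≠ 0 := by
      intro h; simp [h] at hw'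
    have hcw : w * (starRingEnd ℂ) w = 1 := by
      rw [Complex.mul_conj, Complex.normSq_eq_norm_sq, hw']; simp
    have hre := h w hw'
    have hsum : P.eval w * (starRingEnd ℂ) w ^ d + (starRingEnd ℂ) (P.eval w) * w ^ d = 0 := by
      have := Complex.add_conj (P.eval w * (starRingEnd ℂ) w ^ d)
      rw [hre] at this
      simpa using this
    have hinv : w⁻¹ = (starRingEnd ℂ) w := by
      field_simp; rw [mul_comm] at hcw ; rw [mul_comm]; exact hcw.symm
    have hrefl : (R.reflect N).eval w = (starRingEnd ℂ) (P.eval w) * w ^ N := by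
      let _ : Invertible w := invertibleOfNonzero hw0
      let _ : Invertible ((starRingEnd ℂ) w) := invertibleOfNonzero (by simpa using hw0)
      have h1 := Polynomial.eval₂_reflect_mul_pow (RingHom.id ℂ) ((starRingEnd ℂ) w) N R hRdeg
      have h2 : ⅟((starRingEnd ℂ) w) = w := by
        rw [invOf_eq_inv, ← hinv, inv_inv]
      rw [h2] at h1
      have h3 : Polynomial.eval₂ (RingHom.id ℂ) ((starRingEnd ℂ) w) R
          = (starRingEnd ℂ) (P.eval w) := by
        rw [← Polynomial.eval, hR, Polynomial.eval_map, Polynomial.eval₂_hom]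
      rw [h3] at h1
      rw [← h1, Polynomial.eval, mul_assoc, ← mul_pow, mul_comm _ w, hcw]; simp
    show Polynomial.IsRoot Q w
    rw [Polynomial.IsRoot, hQ]
    simp only [Polynomial.eval_add, Polynomial.eval_mul, Polynomial.eval_pow, Polynomial.eval_X]
    rw [hrefl]
    have e : w ^ d * (starRingEnd ℂ) w ^ d = 1 := by rw [← mul_pow, hcw, one_pow]
    linear_combination (w ^ N * w ^ d) * hsum - (w ^ N * P.eval w) * e
  have hc : ∀ k, d ≤ k → P.coeff k + R.coeff (Polynomial.revAt N (N + k - 2 * d)) = 0 := by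
    intro k hk
    have := congrArg (fun q => Polynomial.coeff q (N + k)) hQ0
    simp only [hQ, Polynomial.coeff_add, Polynomial.coeff_zero] at this
    rw [add_comm N k, Polynomial.coeff_X_pow_mul] at this
    have e : k + N = (N + k - 2 * d) + 2 * d := by omega
    rw [e, Polynomial.coeff_X_pow_mul, Polynomial.coeff_reflect] at this
    exact this
  constructor
  · intro k hk
    have h1 := hc k hk.le
    rcases le_or_gt (N + k - 2 * d) N with h2 | h2
    · rw [Polynomial.revAt_le h2, hR, Polynomial.coeff_map, h0 (N - (N + k - 2 * d)) (by omega)] at h1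
      simpa using h1
    · have h3 : Polynomial.revAt N (N + k - 2 * d) = N + k - 2 * d := by
        change Polynomial.revAtFun N _ = _
        rw [Polynomial.revAtFun, if_neg (by omega)]
      rw [h3, Polynomial.coeff_eq_zero_of_natDegree_lt (p := R) (by omega)] at h1
      simpa using h1
  · have h1 := hc d le_rfl
    rw [Polynomial.revAt_le (by omega), show N - (N + d - 2 * d) = d by omega, hR,
      Polynomial.coeff_map, Complex.add_conj] at h1
    have : (2 * (P.coeff d).re) = 0 := by exact_mod_cast h1
    linarith

lemma coeff_line {n : ℕ} (z : Fin n → ℂ) (p : MvPolynomial (Fin n) ℂ) (k : ℕ) :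
    (MvPolynomial.aeval (fun i => Polynomial.C (z i) * Polynomial.X) p : Polynomial ℂ).coeff k
      = MvPolynomial.eval z (MvPolynomial.homogeneousComponent k p) := by
  induction p using MvPolynomial.induction_on' with
  | monomial s c =>
    have h1 : MvPolynomial.eval z (MvPolynomial.homogeneousComponent k (MvPolynomial.monomial s c))
        = if s.degree = k then c * ∏ i, z i ^ s i else 0 := by
      split_ifs with h
      · rw [MvPolynomial.homogeneousComponent_eq_self (MvPolynomial.isHomogeneous_monomial c h),
          MvPolynomial.eval_monomial, Finsupp.prod_fintype _ _ (by simp)]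
      · rw [MvPolynomial.homogeneousComponent_of_mem
          (MvPolynomial.isHomogeneous_monomial c rfl)]
        simp [Ne.symm h]
    rw [h1, MvPolynomial.aeval_monomial, Finsupp.prod_fintype _ _ (by simp)]
    simp only [mul_pow, Finset.prod_mul_distrib, Finset.prod_pow_eq_pow_sum]
    rw [← Finsupp.degree_eq_sum]
    simp only [← map_pow, ← map_prod, Polynomial.algebraMap_eq]
    rw [← mul_assoc, ← map_mul, Polynomial.coeff_C_mul, Polynomial.coeff_X_pow]
    simp [eq_comm]
  | add p q hp hq => simp [hp, hq]

/-- polarization -/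
lemma polar_zero {n : ℕ} (p : MvPolynomial (Fin n ⊕ Fin n) ℂ)
    (h : ∀ z : Fin n → ℂ, MvPolynomial.eval (Sum.elim z (fun i => (starRingEnd ℂ) (z i))) p = 0)
    (u v : Fin n → ℂ) : MvPolynomial.eval (Sum.elim u v) p = 0 := by
  set f : Fin n ⊕ Fin n → MvPolynomial (Fin n ⊕ Fin n) ℂ :=
    Sum.elim (fun i => MvPolynomial.X (Sum.inl i) + MvPolynomial.C Complex.I * MvPolynomial.X (Sum.inr i))
      (fun i => MvPolynomial.X (Sum.inl i) - MvPolynomial.C Complex.I * MvPolynomial.X (Sum.inr i)) with hf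
  have hev : ∀ x, MvPolynomial.eval x (MvPolynomial.bind₁ f p) =
      MvPolynomial.eval (Sum.elim (fun i => x (Sum.inl i) + Complex.I * x (Sum.inr i))
        (fun i => x (Sum.inl i) - Complex.I * x (Sum.inr i))) p := by
    intro x
    rw [MvPolynomial.eval, MvPolynomial.eval₂Hom_bind₁]
    congr 2
    funext i
    rcases i with i | i <;> simp [hf]
  have hq : MvPolynomial.bind₁ f p = 0 := by
    apply MvPolynomial.funext_set (fun _ => Set.range ((↑) : ℝ → ℂ))
    · intro _; exact Set.infinite_range_of_injective Complex.ofReal_injective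
    · intro x hx
      rw [hev, map_zero]
      rw [← h (fun i => x (Sum.inl i) + Complex.I * x (Sum.inr i))]
      congr 2
      congr 1
      funext i
      obtain ⟨a, ha⟩ := hx (Sum.inl i) trivial
      obtain ⟨b, hb⟩ := hx (Sum.inr i) trivial
      simp [← ha, ← hb, sub_eq_add_neg]
  have := hev (Sum.elim (fun i => (u i + v i) / 2) (fun i => (u i - v i) / (2 * Complex.I)))
  rw [hq, map_zero] at this
  rw [this]
  congr 2
  funext i
  have hI := Complex.I_ne_zero
  rcases i with i | i <;> simp <;> field_simp <;> ring

lemma family_zero {n d : ℕ} (Y : KIdx n d → MvPolynomial (Fin n) ℂ)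
    (h : ∀ z : Fin n → ℂ, ∑ a, MvPolynomial.eval z (Y a) * ∏ i, (starRingEnd ℂ) (z i) ^ a.1 i = 0)
    (a : KIdx n d) : Y a = 0 := by
  set p : MvPolynomial (Fin n ⊕ Fin n) ℂ :=
    ∑ a, MvPolynomial.rename Sum.inl (Y a) * ∏ i, MvPolynomial.X (Sum.inr i) ^ a.1 i with hp
  have hev : ∀ u v, MvPolynomial.eval (Sum.elim u v) p
      = ∑ a, MvPolynomial.eval u (Y a) * ∏ i, v i ^ a.1 i := by
    intro u v
    simp [hp, MvPolynomial.eval_rename, map_sum, map_prod]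
  have h0 := polar_zero p (fun z => by rw [hev]; exact h z)
  apply MvPolynomial.funext
  intro u
  set q : MvPolynomial (Fin n) ℂ :=
    ∑ a : KIdx n d, MvPolynomial.monomial (Finsupp.equivFunOnFinite.symm a.1)
      (MvPolynomial.eval u (Y a)) with hq
  have hq0 : q = 0 := by
    apply MvPolynomial.funext
    intro v
    rw [map_zero, ← h0 u v, hev, hq, map_sum]
    refine Finset.sum_congr rfl fun a _ => ?_
    rw [MvPolynomial.eval_monomial, Finsupp.prod_fintype _ _ (by simp)]
    simp
  have := congrArg (MvPolynomial.coeff (Finsupp.equivFunOnFinite.symm a.1)) hq0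
  rw [hq, MvPolynomial.coeff_sum] at this
  simp only [MvPolynomial.coeff_monomial, EmbeddingLike.apply_eq_iff_eq, Subtype.val_inj] at this
  simpa using this

lemma kidx_sum {n d : ℕ} (a : KIdx n d) : ∑ i, a.1 i = d := by
  have := a.2
  rw [Finset.mem_piAntidiag] at this
  exact this.1

lemma conj_homComp {n : ℕ} (α : Fin n → ℕ) (z : Fin n → ℂ) :
    (starRingEnd ℂ) (homComp α z) =
      (Real.sqrt (Nat.multinomial Finset.univ α) : ℂ) * ∏ i, (starRingEnd ℂ) (z i) ^ α i := by
  simp [homComp, map_prod, Complex.conj_ofReal]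

lemma sqrt_multinomial_pos {n : ℕ} (α : Fin n → ℕ) :
    0 < Real.sqrt (Nat.multinomial Finset.univ α) :=
  Real.sqrt_pos.mpr (by exact_mod_cast Nat.multinomial_pos _ _)

lemma conj_homComp_mul {n d : ℕ} (a : KIdx n d) (t : ℂ) (z : Fin n → ℂ) :
    (starRingEnd ℂ) (homComp a.1 (fun i => z i * t)) =
      (starRingEnd ℂ) t ^ d * (starRingEnd ℂ) (homComp a.1 z) := by
  rw [conj_homComp, conj_homComp]
  simp only [map_mul, mul_pow, Finset.prod_mul_distrib, Finset.prod_pow_eq_pow_sum, kidx_sum a]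
  ring

lemma eval_hc_mul {n : ℕ} (p : MvPolynomial (Fin n) ℂ) (k : ℕ) (t : ℂ) (z : Fin n → ℂ) :
    MvPolynomial.eval (fun i => z i * t) (MvPolynomial.homogeneousComponent k p) =
      t ^ k * MvPolynomial.eval z (MvPolynomial.homogeneousComponent k p) := by
  rw [MvPolynomial.eval_eq', MvPolynomial.eval_eq', Finset.mul_sum]
  refine Finset.sum_congr rfl fun s hs => ?_
  have : s.degree = k := by
    by_contra h
    rw [MvPolynomial.mem_support_iff, MvPolynomial.coeff_homogeneousComponent, if_neg h] at hs
    exact hs rfl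
  simp only [mul_pow, Finset.prod_mul_distrib, Finset.prod_pow_eq_pow_sum]
  rw [← Finsupp.degree_eq_sum, this]
  ring

def InHol {n d : ℕ} (X : KIdx n d → MvPolynomial (Fin n) ℂ) : Prop :=
  ∀ z : Fin n → ℂ, (∑ i, ‖z i‖ ^ 2 = 1) →
    (∑ a, MvPolynomial.eval z (X a) * (starRingEnd ℂ) (homComp a.1 z)).re = 0

noncomputable def Gk {n d : ℕ} (X : KIdx n d → MvPolynomial (Fin n) ℂ) (k : ℕ) (z : Fin n → ℂ) : ℂ :=
  ∑ a, MvPolynomial.eval z (MvPolynomial.homogeneousComponent k (X a)) *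
    (starRingEnd ℂ) (homComp a.1 z)

lemma Gk_mul {n d : ℕ} (X : KIdx n d → MvPolynomial (Fin n) ℂ) (k : ℕ) (z : Fin n → ℂ) (t : ℂ) :
    Gk X k (fun i => z i * t) = t ^ k * (starRingEnd ℂ) t ^ d * Gk X k z := by
  simp only [Gk, eval_hc_mul, conj_homComp_mul, Finset.mul_sum]
  exact Finset.sum_congr rfl fun a _ => by ring

lemma sphere_step {n d : ℕ} (X : KIdx n d → MvPolynomial (Fin n) ℂ) (hX : InHol X)
    (h0 : ∀ a, ∀ s : Fin n →₀ ℕ, s.degree < d → (X a).coeff s = 0)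
    (z : Fin n → ℂ) (hz : ∑ i, ‖z i‖ ^ 2 = 1) :
    (∀ k, d < k → Gk X k z = 0) ∧ (Gk X d z).re = 0 := by
  set P : Polynomial ℂ := ∑ a, (MvPolynomial.aeval (fun i => Polynomial.C (z i) * Polynomial.X) (X a)
    : Polynomial ℂ) * Polynomial.C ((starRingEnd ℂ) (homComp a.1 z)) with hP
  have hc : ∀ k, P.coeff k = Gk X k z := by
    intro k
    rw [hP, Polynomial.finsetSum_coeff, Gk]
    refine Finset.sum_congr rfl fun a _ => ?_
    rw [Polynomial.coeff_mul_C, coeff_line]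
  have hev : ∀ w, P.eval w = ∑ a, MvPolynomial.eval (fun i => z i * w) (X a) *
      (starRingEnd ℂ) (homComp a.1 z) := by
    intro w
    rw [hP, Polynomial.eval_finsetSum]
    refine Finset.sum_congr rfl fun a _ => ?_
    rw [Polynomial.eval_mul, Polynomial.eval_C]
    congr 1
    rw [← Polynomial.coe_evalRingHom, MvPolynomial.aeval_def, MvPolynomial.hom_eval₂,
      MvPolynomial.eval]
    simp only [MvPolynomial.coe_eval₂Hom]
    congr 1
    · ext x; simp
    · funext i; simp
  have := circle_lemma P d ?_ ?_
  · simpa only [hc] using this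
  · intro k hk
    rw [hc, Gk]
    refine Finset.sum_eq_zero fun a _ => ?_
    have : MvPolynomial.homogeneousComponent k (X a) = 0 := by
      ext s
      rw [MvPolynomial.coeff_homogeneousComponent]
      split_ifs with h
      · simpa using h0 a s (by omega)
      · simp
    simp [this]
  · intro w hw
    have h1 := hX (fun i => z i * w) (by simpa [hw] using hz)
    rw [hev, Finset.sum_mul]
    convert h1 using 2
    refine Finset.sum_congr rfl fun a _ => ?_
    rw [conj_homComp_mul]; ring

lemma all_step {n d : ℕ} (hd : 1 ≤ d) (X : KIdx n d → MvPolynomial (Fin n) ℂ) (hX : InHol X)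
    (h0 : ∀ a, ∀ s : Fin n →₀ ℕ, s.degree < d → (X a).coeff s = 0)
    (z : Fin n → ℂ) :
    (∀ k, d < k → Gk X k z = 0) ∧ (Gk X d z).re = 0 := by
  by_cases hz : z = 0
  · have hG : ∀ k, Gk X k z = 0 := by
      intro k
      have := Gk_mul X k z 0
      have e : (fun i => z i * 0) = z := by funext i; simp [hz]
      rw [e] at this
      rw [this, map_zero, zero_pow (n := d) (by omega)]; simp
    simp [hG]
  · set ρ : ℝ := Real.sqrt (∑ i, ‖z i‖ ^ 2) with hρ
    have hpos : 0 < ∑ i, ‖z i‖ ^ 2 := by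
      obtain ⟨i, hi⟩ := Function.ne_iff.mp hz
      refine Finset.sum_pos' (fun _ _ => by positivity) ⟨i, Finset.mem_univ _, ?_⟩
      have : 0 < ‖z i‖ := norm_pos_iff.mpr hi
      positivity
    have hρ0 : 0 < ρ := Real.sqrt_pos.mpr hpos
    have hρ2 : ρ ^ 2 = ∑ i, ‖z i‖ ^ 2 := Real.sq_sqrt hpos.le
    have hu := sphere_step X hX h0 (fun i => z i * ((ρ⁻¹ : ℝ) : ℂ)) (by
      simp only [norm_mul, mul_pow, ← Finset.sum_mul, Complex.norm_real, norm_inv, Real.norm_eq_abs, sq_abs, inv_pow]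
      rw [← hρ2, mul_inv_cancel₀ (by positivity)])
    have e : ∀ k, Gk X k z = ((ρ ^ (k + d) : ℝ) : ℂ) * Gk X k (fun i => z i * ((ρ⁻¹ : ℝ) : ℂ)) := by
      intro k
      rw [Gk_mul, Complex.conj_ofReal]
      have : (ρ : ℂ) ≠ 0 := by exact_mod_cast hρ0.ne'
      push_cast
      simp only [inv_pow, pow_add]
      field_simp
    constructor
    · intro k hk
      rw [e, hu.1 k hk, mul_zero]
    · rw [e, Complex.re_ofReal_mul, hu.2, mul_zero]

noncomputable abbrev ex {n d : ℕ} (a : KIdx n d) : Fin n →₀ ℕ := Finsupp.equivFunOnFinite.symm a.1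

lemma ex_degree {n d : ℕ} (a : KIdx n d) : (ex a).degree = d := by
  rw [Finsupp.degree_eq_sum]; simpa using kidx_sum a

lemma ex_inj {n d : ℕ} {a b : KIdx n d} : ex a = ex b ↔ a = b := by
  simp [ex, Subtype.val_inj]

/-- the matrix of the degree-d part -/
noncomputable def Amat {n d : ℕ} (X : KIdx n d → MvPolynomial (Fin n) ℂ) (a b : KIdx n d) : ℂ :=
  (Real.sqrt (Nat.multinomial Finset.univ a.1) : ℂ) * (X a).coeff (ex b)

lemma hc_eq_sum {n d : ℕ} (p : MvPolynomial (Fin n) ℂ) :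
    MvPolynomial.homogeneousComponent d p =
      ∑ b : KIdx n d, MvPolynomial.monomial (ex b) (p.coeff (ex b)) := by
  ext s
  rw [MvPolynomial.coeff_homogeneousComponent, MvPolynomial.coeff_sum]
  simp only [MvPolynomial.coeff_monomial]
  split_ifs with h
  · let b : KIdx n d := ⟨s, by
      rw [Finset.mem_piAntidiag]
      rw [Finsupp.degree_eq_sum] at h
      exact ⟨h, by simp⟩⟩
    have hb : ex b = s := by ext i; simp [ex, b]
    rw [Finset.sum_eq_single b]
    · simp [hb]
    · intro c _ hc
      rw [if_neg]
      rw [← hb, ex_inj]; exact hc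
    · simp
  · symm
    refine Finset.sum_eq_zero fun b _ => ?_
    rw [if_neg]
    rintro rfl
    exact h (ex_degree b)

lemma eval_mono {n d : ℕ} (z : Fin n → ℂ) (b : KIdx n d) (c : ℂ) :
    MvPolynomial.eval z (MvPolynomial.monomial (ex b) c) = c * ∏ i, z i ^ b.1 i := by
  rw [MvPolynomial.eval_monomial, Finsupp.prod_fintype _ _ (by simp)]
  simp [ex]

lemma upper_zero {n d : ℕ} (hd : 1 ≤ d) (X : KIdx n d → MvPolynomial (Fin n) ℂ) (hX : InHol X)
    (h0 : ∀ a, ∀ s : Fin n →₀ ℕ, s.degree < d → (X a).coeff s = 0)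
    (a : KIdx n d) (s : Fin n →₀ ℕ) (hs : d < s.degree) : (X a).coeff s = 0 := by
  have := family_zero (fun a : KIdx n d => MvPolynomial.C (Real.sqrt (Nat.multinomial Finset.univ a.1) : ℂ) *
    MvPolynomial.homogeneousComponent s.degree (X a)) (fun z => by
      rw [← (all_step hd X hX h0 z).1 _ hs, Gk]
      refine Finset.sum_congr rfl fun a _ => ?_
      rw [conj_homComp, map_mul, MvPolynomial.eval_C]; ring) a
  have := congrArg (MvPolynomial.coeff s) this
  simp only [MvPolynomial.coeff_C_mul, MvPolynomial.coeff_homogeneousComponent, if_true,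
    MvPolynomial.coeff_zero, mul_eq_zero] at this
  refine this.resolve_left ?_
  exact_mod_cast (sqrt_multinomial_pos a.1).ne'

lemma skew {n d : ℕ} (hd : 1 ≤ d) (X : KIdx n d → MvPolynomial (Fin n) ℂ) (hX : InHol X)
    (h0 : ∀ a, ∀ s : Fin n →₀ ℕ, s.degree < d → (X a).coeff s = 0)
    (a b : KIdx n d) : Amat X a b + (starRingEnd ℂ) (Amat X b a) = 0 := by
  have hG : ∀ z, Gk X d z = ∑ a, ∑ b, Amat X a b * (∏ i, z i ^ b.1 i) *
      ∏ i, (starRingEnd ℂ) (z i) ^ a.1 i := by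
    intro z
    rw [Gk]
    refine Finset.sum_congr rfl fun a _ => ?_
    rw [conj_homComp, hc_eq_sum, map_sum, Finset.sum_mul]
    refine Finset.sum_congr rfl fun b _ => ?_
    rw [eval_mono, Amat]; ring
  have := family_zero (fun a : KIdx n d => ∑ b : KIdx n d, MvPolynomial.monomial (ex b)
    (Amat X a b + (starRingEnd ℂ) (Amat X b a))) (fun z => by
      have h1 := (all_step hd X hX h0 z).2
      have h2 := Complex.add_conj (Gk X d z)
      rw [h1, hG] at h2
      simp only [mul_zero, Complex.ofReal_zero, map_sum, map_mul, map_prod, map_pow,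
        Complex.conj_conj] at h2
      rw [Finset.sum_comm (f := fun a b => (starRingEnd ℂ) (Amat X a b) *
        (∏ i, (starRingEnd ℂ) (z i) ^ b.1 i) * ∏ i, z i ^ a.1 i), ← Finset.sum_add_distrib] at h2
      rw [← h2]
      refine Finset.sum_congr rfl fun a _ => ?_
      rw [← Finset.sum_add_distrib, map_sum, Finset.sum_mul]
      refine Finset.sum_congr rfl fun b _ => ?_
      rw [eval_mono]; ring) a
  have := congrArg (MvPolynomial.coeff (ex b)) this
  simp only [MvPolynomial.coeff_sum, MvPolynomial.coeff_monomial, ex_inj,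
    MvPolynomial.coeff_zero] at this
  simpa using this

lemma real_smul_eq {n : ℕ} (r : ℝ) (p : MvPolynomial (Fin n) ℂ) :
    r • p = MvPolynomial.C (r : ℂ) * p := by
  ext s
  simp [MvPolynomial.coeff_smul, MvPolynomial.coeff_C_mul]

def holSub (n d : ℕ) : Submodule ℝ (KIdx n d → MvPolynomial (Fin n) ℂ) where
  carrier := {X | InHol X}
  zero_mem' := by intro z _; simp
  add_mem' := by
    intro X Y hX hY z hz
    have h1 := hX z hz
    have h2 := hY z hz
    simp only [Pi.add_apply, map_add, add_mul, Finset.sum_add_distrib, Complex.add_re]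
    rw [h1, h2, add_zero]
  smul_mem' := by
    intro r X hX z hz
    have := hX z hz
    simp only [Pi.smul_apply, real_smul_eq, map_mul, MvPolynomial.eval_C, mul_assoc]
    rw [← Finset.mul_sum, Complex.re_ofReal_mul, this, mul_zero]

abbrev BIdx (n d : ℕ) : Type := Σ k : Fin d, KIdx n k

/-- elementary deformation -/
noncomputable def Dmap {n d k : ℕ} (b : KIdx n d) (β : KIdx n k) (c : ℂ) :
    KIdx n d → MvPolynomial (Fin n) ℂ := fun a =>
  (if a = b then MvPolynomial.monomial (ex β) c else 0) +
  (if ∀ i, β.1 i ≤ a.1 i then MvPolynomial.monomial (ex b + Finsupp.equivFunOnFinite.symm (a.1 - β.1))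
    (-((starRingEnd ℂ) c * (Real.sqrt (Nat.multinomial Finset.univ b.1) : ℂ) *
      (Nat.multinomial Finset.univ (a.1 - β.1) : ℂ) /
        (Real.sqrt (Nat.multinomial Finset.univ a.1) : ℂ))) else 0)

lemma sum_shift {n d k : ℕ} (hk : k ≤ d) (β : KIdx n k) (z : Fin n → ℂ)
    (hz : ∑ i, ‖z i‖ ^ 2 = 1) :
    ∑ a : KIdx n d, (if ∀ i, β.1 i ≤ a.1 i then (Nat.multinomial Finset.univ (a.1 - β.1) : ℂ) *
      (∏ i, z i ^ (a.1 i - β.1 i)) * (∏ i, (starRingEnd ℂ) (z i) ^ (a.1 i)) else 0)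
      = ∏ i, (starRingEnd ℂ) (z i) ^ (β.1 i) := by
  have h1 : ∑ i, z i * (starRingEnd ℂ) (z i) = 1 := by
    simp only [Complex.mul_conj, Complex.normSq_eq_norm_sq]
    exact_mod_cast hz
  have h2 := Finset.sum_pow_eq_sum_piAntidiag Finset.univ (fun i => z i * (starRingEnd ℂ) (z i)) (d - k)
  rw [h1, one_pow] at h2
  rw [← one_mul (∏ i, (starRingEnd ℂ) (z i) ^ (β.1 i)), h2, Finset.sum_mul]
  rw [Finset.sum_coe_sort (Finset.piAntidiag (Finset.univ : Finset (Fin n)) d)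
    (fun a => (if ∀ i, β.1 i ≤ a i then (Nat.multinomial Finset.univ (a - β.1) : ℂ) *
      (∏ i, z i ^ (a i - β.1 i)) * (∏ i, (starRingEnd ℂ) (z i) ^ (a i)) else 0))]
  rw [← Finset.sum_filter]
  have hβ := kidx_sum β
  refine Finset.sum_nbij' (fun a => a - β.1) (fun γ => γ + β.1) ?_ ?_ ?_ ?_ ?_
  · intro a ha
    simp only [Finset.mem_filter, Finset.mem_piAntidiag, Finset.mem_univ, implies_true, and_true] at ha ⊢
    simp only [Pi.sub_apply]
    rw [Finset.sum_tsub_distrib _ (fun i _ => ha.2 i), ha.1, hβ]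
  · intro γ hγ
    simp only [Finset.mem_filter, Finset.mem_piAntidiag, Finset.mem_univ, implies_true, and_true] at hγ ⊢
    refine ⟨?_, fun i => by simp⟩
    simp only [Pi.add_apply, Finset.sum_add_distrib, hγ, hβ]
    omega
  · intro a ha
    simp only [Finset.mem_filter] at ha
    exact tsub_add_cancel_of_le ha.2
  · intro γ _
    simp
  · intro a ha
    simp only [Finset.mem_filter] at ha
    simp only [Pi.sub_apply, mul_pow, Finset.prod_mul_distrib, mul_assoc]
    congr 2
    rw [← Finset.prod_mul_distrib]
    refine Finset.prod_congr rfl fun i _ => ?_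
    rw [← pow_add, Nat.sub_add_cancel (ha.2 i)]

lemma Dmap_hol {n d k : ℕ} (hk : k ≤ d) (b : KIdx n d) (β : KIdx n k) (c : ℂ) :
    InHol (Dmap b β c) := by
  intro z hz
  have key : ∑ a, MvPolynomial.eval z (Dmap b β c a) * (starRingEnd ℂ) (homComp a.1 z)
      = c * (∏ i, z i ^ β.1 i) * (starRingEnd ℂ) (homComp b.1 z)
        - (starRingEnd ℂ) (c * (∏ i, z i ^ β.1 i) * (starRingEnd ℂ) (homComp b.1 z)) := by
    simp only [Dmap, map_add, add_mul, Finset.sum_add_distrib, sub_eq_add_neg]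
    congr 1
    · rw [Finset.sum_eq_single b]
      · simp only [if_true, eval_mono]
      · intro a _ ha; simp [ha]
      · simp
    · simp only [map_mul, Complex.conj_conj, map_prod, map_pow]
      rw [← sum_shift hk β z hz, Finset.mul_sum, Finset.sum_mul, ← Finset.sum_neg_distrib]
      refine Finset.sum_congr rfl fun a _ => ?_
      split_ifs with h
      · rw [MvPolynomial.eval_monomial, Finsupp.prod_fintype _ _ (by simp), conj_homComp, homComp]
        have hs : (Real.sqrt (Nat.multinomial Finset.univ a.1) : ℂ) ≠ 0 := by
          exact_mod_cast (sqrt_multinomial_pos a.1).ne'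
        simp only [ex, Finsupp.add_apply, Finsupp.equivFunOnFinite_symm_apply_apply, Pi.sub_apply, pow_add,
          Finset.prod_mul_distrib]
        field_simp
      · simp
  rw [key, Complex.sub_re, Complex.conj_re, sub_self]

lemma Dmap_coeff {n d k : ℕ} (hk : k < d) (b : KIdx n d) (β : KIdx n k) (c : ℂ)
    (a : KIdx n d) (s : Fin n →₀ ℕ) (hs : s.degree ≤ d) :
    (Dmap b β c a).coeff s = if a = b ∧ ex β = s then c else 0 := by
  have h2 : (if ∀ i, β.1 i ≤ a.1 i then MvPolynomial.monomial (ex b + Finsupp.equivFunOnFinite.symm (a.1 - β.1))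
    (-((starRingEnd ℂ) c * (Real.sqrt (Nat.multinomial Finset.univ b.1) : ℂ) *
      (Nat.multinomial Finset.univ (a.1 - β.1) : ℂ) /
        (Real.sqrt (Nat.multinomial Finset.univ a.1) : ℂ))) else 0).coeff s = 0 := by
    split_ifs with h
    · rw [MvPolynomial.coeff_monomial, if_neg]
      rintro rfl
      rw [map_add, ex_degree, Finsupp.degree_eq_sum] at hs
      simp only [Finsupp.equivFunOnFinite_symm_apply_apply, Pi.sub_apply] at hs
      rw [Finset.sum_tsub_distrib _ (fun i _ => h i), kidx_sum, kidx_sum] at hs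
      omega
    · simp
  rw [Dmap, MvPolynomial.coeff_add, h2, add_zero]
  by_cases h : a = b
  · simp [h, MvPolynomial.coeff_monomial]
  · simp [h]

noncomputable def Emap {n d : ℕ} (A : KIdx n d → KIdx n d → ℂ) :
    KIdx n d → MvPolynomial (Fin n) ℂ := fun a =>
  ∑ b, MvPolynomial.monomial (ex b) (A a b / (Real.sqrt (Nat.multinomial Finset.univ a.1) : ℂ))

lemma Emap_hol {n d : ℕ} (A : KIdx n d → KIdx n d → ℂ)
    (hA : ∀ a b, A a b + (starRingEnd ℂ) (A b a) = 0) : InHol (Emap A) := by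
  intro z _
  have key : ∑ a, MvPolynomial.eval z (Emap A a) * (starRingEnd ℂ) (homComp a.1 z)
      = ∑ a, ∑ b, A a b * (∏ i, z i ^ b.1 i) * ∏ i, (starRingEnd ℂ) (z i) ^ a.1 i := by
    refine Finset.sum_congr rfl fun a _ => ?_
    rw [Emap, map_sum, Finset.sum_mul]
    refine Finset.sum_congr rfl fun b _ => ?_
    have hs : (Real.sqrt (Nat.multinomial Finset.univ a.1) : ℂ) ≠ 0 := by
      exact_mod_cast (sqrt_multinomial_pos a.1).ne'
    rw [eval_mono, conj_homComp]
    field_simp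
  rw [key]
  set S := ∑ a, ∑ b, A a b * (∏ i, z i ^ b.1 i) * ∏ i, (starRingEnd ℂ) (z i) ^ a.1 i with hS
  have h1 : S + (starRingEnd ℂ) S = 0 := by
    rw [hS]
    simp only [map_sum, map_mul, map_prod, map_pow, Complex.conj_conj]
    rw [Finset.sum_comm (f := fun a b => (starRingEnd ℂ) (A a b) *
        (∏ i, (starRingEnd ℂ) (z i) ^ b.1 i) * ∏ i, z i ^ a.1 i), ← Finset.sum_add_distrib]
    refine Finset.sum_eq_zero fun a _ => ?_
    rw [← Finset.sum_add_distrib]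
    refine Finset.sum_eq_zero fun b _ => ?_
    linear_combination ((∏ i, z i ^ b.1 i) * ∏ i, (starRingEnd ℂ) (z i) ^ a.1 i) * hA a b
  rw [Complex.add_conj] at h1
  have : 2 * S.re = 0 := by exact_mod_cast h1
  linarith

lemma Emap_coeff_low {n d : ℕ} (A : KIdx n d → KIdx n d → ℂ) (a : KIdx n d) (s : Fin n →₀ ℕ)
    (hs : s.degree < d) : (Emap A a).coeff s = 0 := by
  rw [Emap, MvPolynomial.coeff_sum]
  refine Finset.sum_eq_zero fun b _ => ?_
  rw [MvPolynomial.coeff_monomial, if_neg]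
  rintro rfl
  rw [ex_degree] at hs
  omega

lemma Amat_Emap {n d : ℕ} (A : KIdx n d → KIdx n d → ℂ) (a b : KIdx n d) :
    Amat (Emap A) a b = A a b := by
  have hs : (Real.sqrt (Nat.multinomial Finset.univ a.1) : ℂ) ≠ 0 := by
    exact_mod_cast (sqrt_multinomial_pos a.1).ne'
  rw [Amat, Emap, MvPolynomial.coeff_sum]
  simp only [MvPolynomial.coeff_monomial, ex_inj]
  simp only [Finset.sum_ite_eq', Finset.mem_univ, if_true]
  field_simp

noncomputable def Phi (n d : ℕ) : holSub n d →ₗ[ℝ]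
    ((KIdx n d × BIdx n d → ℂ) × (KIdx n d × KIdx n d → ℝ)) where
  toFun X := (fun p => (X.1 p.1).coeff (ex p.2.2),
    fun p => (Amat X.1 p.1 p.2).re + (Amat X.1 p.1 p.2).im)
  map_add' X Y := by
    ext p
    · simp
    · have h : Amat (X.1 + Y.1) p.1 p.2 = Amat X.1 p.1 p.2 + Amat Y.1 p.1 p.2 := by
        simp [Amat, mul_add]
      change (Amat (X.1 + Y.1) p.1 p.2).re + (Amat (X.1 + Y.1) p.1 p.2).im =
        ((Amat X.1 p.1 p.2).re + (Amat X.1 p.1 p.2).im) +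
          ((Amat Y.1 p.1 p.2).re + (Amat Y.1 p.1 p.2).im)
      rw [h, Complex.add_re, Complex.add_im]; ring
  map_smul' r X := by
    ext p
    · simp [real_smul_eq]
    · have h : Amat (r • X.1) p.1 p.2 = (r : ℂ) * Amat X.1 p.1 p.2 := by
        simp only [Amat, Pi.smul_apply, real_smul_eq, MvPolynomial.coeff_C_mul]; ring
      change (Amat (r • X.1) p.1 p.2).re + (Amat (r • X.1) p.1 p.2).im =
        r * ((Amat X.1 p.1 p.2).re + (Amat X.1 p.1 p.2).im)
      rw [h, Complex.re_ofReal_mul, Complex.im_ofReal_mul]; ring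

lemma kidx_of_degree {n k : ℕ} (s : Fin n →₀ ℕ) (h : s.degree = k) : ∃ b : KIdx n k, ex b = s := by
  refine ⟨⟨s, ?_⟩, ?_⟩
  · rw [Finset.mem_piAntidiag]
    rw [Finsupp.degree_eq_sum] at h
    exact ⟨h, by simp⟩
  · ext i; simp [ex]

lemma Phi_injective {n d : ℕ} (hd : 1 ≤ d) : Function.Injective (Phi n d) := by
  rw [← LinearMap.ker_eq_bot, LinearMap.ker_eq_bot']
  rintro ⟨X, hX⟩ h
  have hX' : InHol X := hX
  have h1 : ∀ a, ∀ s : Fin n →₀ ℕ, s.degree < d → (X a).coeff s = 0 := by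
    intro a s hs
    obtain ⟨b, hb⟩ := kidx_of_degree s rfl
    have := congrFun (congrArg Prod.fst h) (a, ⟨⟨s.degree, hs⟩, b⟩)
    rw [← hb]
    exact this
  have h2 : ∀ a b, (Amat X a b).re + (Amat X a b).im = 0 := by
    intro a b
    exact congrFun (congrArg Prod.snd h) (a, b)
  have h3 : ∀ a b, Amat X a b = 0 := by
    intro a b
    have e := skew hd X hX' h1 a b
    have e1 := congrArg Complex.re e
    have e2 := congrArg Complex.im e
    simp at e1 e2
    have := h2 a b
    have := h2 b a
    apply Complex.ext <;> simp <;> linarith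
  apply Subtype.ext
  funext a
  ext s
  change (X a).coeff s = MvPolynomial.coeff s 0
  rw [MvPolynomial.coeff_zero]
  rcases lt_trichotomy s.degree d with hs | hs | hs
  · exact h1 a s hs
  · obtain ⟨b, rfl⟩ := kidx_of_degree s hs
    have := h3 a b
    rw [Amat, mul_eq_zero] at this
    refine this.resolve_left ?_
    exact_mod_cast (sqrt_multinomial_pos a.1).ne'
  · exact upper_zero hd X hX' h1 a s hs

lemma bidx_ex_inj {n d : ℕ} (x y : BIdx n d) : ex x.2 = ex y.2 ↔ x = y := by
  constructor
  · intro h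
    obtain ⟨⟨k, hk⟩, x⟩ := x
    obtain ⟨⟨l, hl⟩, y⟩ := y
    have : k = l := by
      have h1 := congrArg Finsupp.degree h
      rw [ex_degree, ex_degree] at h1
      exact h1
    subst this
    have h2 : x = y := ex_inj.mp h
    rw [h2]
  · rintro rfl; rfl

lemma Phi_surjective {n d : ℕ} : Function.Surjective (Phi n d) := by
  rintro ⟨c, M⟩
  let D : KIdx n d × BIdx n d → holSub n d := fun p =>
    ⟨Dmap p.1 p.2.2 (c p), Dmap_hol p.2.1.2.le _ _ _⟩
  let A : KIdx n d → KIdx n d → ℂ := fun a b =>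
    ⟨(M (a, b) - M (b, a)) / 2, (M (a, b) + M (b, a)) / 2⟩
  have hA : ∀ a b, A a b + (starRingEnd ℂ) (A b a) = 0 := by
    intro a b
    apply Complex.ext <;> simp [A] <;> ring
  let E : holSub n d := ⟨Emap A, Emap_hol A hA⟩
  have hE : Phi n d E = (0, M) := by
    refine Prod.ext ?_ ?_
    · funext p
      exact Emap_coeff_low A _ _ (by rw [ex_degree]; exact p.2.1.2)
    · funext p
      change (Amat (Emap A) p.1 p.2).re + (Amat (Emap A) p.1 p.2).im = M p
      rw [Amat_Emap]
      simp only [A]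
      ring
  have hD : ∀ p, Phi n d (D p) = (Pi.single p (c p), 0) := by
    intro p
    refine Prod.ext ?_ ?_
    · funext q
      change (Dmap p.1 p.2.2 (c p) q.1).coeff (ex q.2.2) = _
      rw [Dmap_coeff p.2.1.2 _ _ _ _ _ (by rw [ex_degree]; exact q.2.1.2.le)]
      simp only [bidx_ex_inj, Pi.single_apply]
      congr 1
      rw [Prod.ext_iff, eq_comm (a := p.2)]
    · funext q
      change (Amat (Dmap p.1 p.2.2 (c p)) q.1 q.2).re + (Amat (Dmap p.1 p.2.2 (c p)) q.1 q.2).im = 0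
      rw [Amat, Dmap_coeff p.2.1.2 _ _ _ _ _ (by rw [ex_degree]), if_neg]
      · simp
      · rintro ⟨_, h⟩
        have := congrArg Finsupp.degree h
        rw [ex_degree, ex_degree] at this
        have := p.2.1.2
        omega
  refine ⟨∑ p, D p + E, ?_⟩
  rw [map_add, map_sum, hE]
  simp only [hD]
  refine Prod.ext ?_ ?_
  · rw [Prod.fst_add, Prod.fst_sum]
    simp only [add_zero]
    exact Finset.univ_sum_single c
  · rw [Prod.snd_add, Prod.snd_sum]
    simp

lemma card_kidx (n k : ℕ) : Fintype.card (KIdx n k) = n.multichoose k := by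
  rw [Fintype.card_coe, ← Finset.map_sym_eq_piAntidiag, Finset.card_map]
  rw [Finset.sym_univ, Finset.card_univ, Sym.card_sym_eq_multichoose, Fintype.card_fin]

lemma card_bidx (n d : ℕ) (hd : 1 ≤ d) : Fintype.card (BIdx n d) = (n + d - 1).choose n := by
  rw [Fintype.card_sigma]
  simp only [card_kidx]
  rw [Fin.sum_univ_eq_sum_range (fun k => n.multichoose k) d]
  obtain ⟨e, rfl⟩ : ∃ e, d = e + 1 := ⟨d - 1, by omega⟩
  rw [Nat.sum_range_multichoose]
  congr 1
  omega

lemma main_dim (n d : ℕ) (hd : 1 ≤ d) : Module.finrank ℝ (holSub n d) =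
    (n + d - 1).choose d * (n + d - 1).choose d
        + 2 * (n + d - 1).choose d * (n + d - 1).choose n := by
  rw [(LinearEquiv.ofBijective (Phi n d) ⟨Phi_injective hd, Phi_surjective⟩).finrank_eq]
  rw [Module.finrank_prod, Module.finrank_pi, Module.finrank_pi_fintype]
  simp only [Complex.finrank_real_complex, Finset.sum_const, Finset.card_univ, Fintype.card_prod,
    card_bidx n d hd, card_kidx, Nat.multichoose_eq, smul_eq_mul]
  ring

/-- The real dimension of the space `hol(H_n^d)` of infinitesimal
deformations of the homogeneous sphere map `H_n^d` — holomorphic polynomial maps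
`X : ℂⁿ → ℂ^{K(n,d)}` with `Re(X · conj H_n^d) = 0` on `S^{2n-1}` — equals
`((2d+n)/d)·K(n,d)² = K(n,d)² + 2 K(n,d) C(n+d−1, n)`, where `K(n,d) = C(n+d−1,d)`. -/
theorem dim_infinitesimal_deformations_homogeneous_map (n d : ℕ) (hn : 2 ≤ n)
    (hd : 1 ≤ d) :
    Module.finrank ℝ
      (Submodule.span ℝ
        {X : ({α // α ∈ Finset.piAntidiag (Finset.univ : Finset (Fin n)) d} →
            MvPolynomial (Fin n) ℂ) |
          ∀ z : Fin n → ℂ, (∑ i, ‖z i‖ ^ 2 = 1) →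
            (∑ a, MvPolynomial.eval z (X a) * (starRingEnd ℂ) (homComp a.1 z)).re = 0})
      = (n + d - 1).choose d * (n + d - 1).choose d
        + 2 * (n + d - 1).choose d * (n + d - 1).choose n := by
  have h : Submodule.span ℝ
        {X : ({α // α ∈ Finset.piAntidiag (Finset.univ : Finset (Fin n)) d} →
            MvPolynomial (Fin n) ℂ) |
          ∀ z : Fin n → ℂ, (∑ i, ‖z i‖ ^ 2 = 1) →
            (∑ a, MvPolynomial.eval z (X a) * (starRingEnd ℂ) (homComp a.1 z)).re = 0}
      = holSub n d := Submodule.span_eq (holSub n d)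
  rw [h]
  exact main_dim n d hd
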